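/- Fix λ ∈ (0,1/2) and δ > 0. There exist constants γ, τ > 0 and n₀ ∈ ℕ (depending only on λ, δ) such that the following holds for all n ≥ n₀ and p ∈ (λ, 1−λ). If f : {0,1}^{2n} → {0,1} has total influence I^{(p)}(f) ≤ γ·n and some coordinate i with Inf_i^{(p)}(f) ≥ δ, then for a uniformly random 2-to-1 minor map π : [2n] → [n], with probability at least τ the minor f^π satisfies Inf_{π(i)}^{(p)}(f^π) ≥ τ. -/

import Mathlib

open Finset
open scoped Classical

noncomputable def w (p : ℝ) (b : Bool) : ℝ := if b then p else 1 - p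

noncomputable def mu (p : ℝ) {n : ℕ} (x : Fin n → Bool) : ℝ := ∏ i, w p (x i)

def bflip {n : ℕ} (x : Fin n → Bool) (i : Fin n) : Fin n → Bool :=
  Function.update x i (!(x i))

/-- `Inf_i^{(p)}(f) = p(1−p)·Pr_{μ_p}[f(x) ≠ f(x⊕i)]` -/
noncomputable def pinf (p : ℝ) {n : ℕ} (f : (Fin n → Bool) → Bool) (i : Fin n) : ℝ :=
  p * (1 - p) * ∑ x : Fin n → Bool, if f x ≠ f (bflip x i) then mu p x else 0

/-- total influence `I^{(p)}(f) = ∑_i Inf_i^{(p)}(f)` -/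
noncomputable def totalInf (p : ℝ) {n : ℕ} (f : (Fin n → Bool) → Bool) : ℝ :=
  ∑ i, pinf p f i

/-- A 2-to-1 map `π : [2n] → [n]`: every fiber has exactly two elements. -/
abbrev IsTwoToOne {n : ℕ} (π : Fin (2*n) → Fin n) : Prop :=
  ∀ j : Fin n, (Finset.univ.filter (fun i => π i = j)).card = 2

/-!
If the 2-to-1 map `π` pairs `i` with `j`, then flipping the coordinate `π i` of the minor flips
both `i` and `j` in `f`. Hence the minor is sensitive at `π i` wherever `f` is sensitive at `x`
to `i` but not at `x ⊕ i` to `j`. Given `x = y ∘ π`, the partner `j` is uniformly distributed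
over the coordinates other than `i` at which `x` agrees with `x i`, so on average the second
event costs only about `1 / n` of the total influence of `f`, that is `γ`.

The points `x = y ∘ π` have even Hamming weight, and within `O(√n)` of the mean weight their
averaged law is comparable to `mu p`: both are uniform on each layer, so this compares the
masses `binomialMass n p k` and `binomialMass (2 * n) p (2 * k)`, which Stirling's formula does up
to constants. Flipping `i` exchanges even and odd weights, so the even points carry a constant
fraction of the influence of `i`, and Chebyshev's inequality discards the atypical weights. A
reverse Markov inequality turns the bound on the mean over `π` into one on the probability.
-/

open scoped BigOperators

section Binomial

variable {p : ℝ} {k m : ℕ}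

/-- The probability that a binomial variable with parameters `n` and `p` equals `k`. -/
noncomputable def binomialMass (n : ℕ) (p : ℝ) (k : ℕ) : ℝ :=
  n.choose k * p ^ k * (1 - p) ^ (n - k)

lemma sum_sq_mul_binomialMass (n : ℕ) (p : ℝ) :
    ∑ k ∈ range (n + 1), ((k : ℝ) - n * p) ^ 2 * binomialMass n p k = n * p * (1 - p) := by
  have h := congrArg (Polynomial.eval p) (bernsteinPolynomial.variance ℝ n)
  simp only [Polynomial.eval_finsetSum, bernsteinPolynomial, Polynomial.eval_mul,
    Polynomial.eval_pow, Polynomial.eval_sub, Polynomial.eval_X, Polynomial.eval_one,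
    Polynomial.eval_natCast, nsmul_eq_mul] at h
  rw [← h]
  exact sum_congr rfl fun k _ => by rw [binomialMass]; ring

lemma binomialMass_add (p : ℝ) (k m : ℕ) :
    binomialMass (k + m) p k
      = (k + m).factorial / (k.factorial * m.factorial) * (p ^ k * (1 - p) ^ m) := by
  rw [binomialMass, Nat.cast_add_choose, Nat.add_sub_cancel_left, mul_assoc]

/-- Stirling's approximation of `n!`, up to the constant factor `√(2π)`. -/
noncomputable def stirlingApprox (n : ℕ) : ℝ := √n * (n / Real.exp 1) ^ n

lemma stirlingApprox_pos {n : ℕ} (hn : 0 < n) : 0 < stirlingApprox n := by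
  unfold stirlingApprox; positivity

lemma two_mul_stirlingApprox_le_factorial (n : ℕ) : 2 * stirlingApprox n ≤ n.factorial :=
  calc 2 * stirlingApprox n = √4 * √n * (n / Real.exp 1) ^ n := by
        rw [stirlingApprox, show (4 : ℝ) = 2 ^ 2 by norm_num, Real.sqrt_sq zero_le_two, mul_assoc]
    _ ≤ √(2 * Real.pi * n) * (n / Real.exp 1) ^ n := by
        rw [← Real.sqrt_mul (by norm_num)]
        gcongr
        linarith [Real.pi_gt_three]
    _ ≤ n.factorial := Stirling.le_factorial_stirling n

lemma factorial_le_three_mul_stirlingApprox {n : ℕ} (hn : 0 < n) :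
    n.factorial ≤ 3 * stirlingApprox n := by
  have hseq : Stirling.stirlingSeq n ≤ Real.exp 1 / √2 := by
    rw [← Stirling.stirlingSeq_one]
    obtain ⟨m, rfl⟩ := Nat.exists_eq_succ_of_ne_zero hn.ne'
    exact Stirling.stirlingSeq'_antitone (Nat.zero_le m)
  rw [Stirling.stirlingSeq, div_le_iff₀ (by positivity), Real.sqrt_mul zero_le_two] at hseq
  calc (n.factorial : ℝ) ≤ Real.exp 1 * stirlingApprox n := by
        refine hseq.trans_eq ?_
        rw [stirlingApprox]
        field_simp
    _ ≤ 3 * stirlingApprox n := by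
        gcongr
        · exact (stirlingApprox_pos hn).le
        · linarith [Real.exp_one_lt_d9]

/-- The large deviation factor `exp (-n * KL(k / n ‖ p))` of the binomial mass at `k`, where
`n = k + m`. -/
noncomputable def klFactor (p : ℝ) (k m : ℕ) : ℝ :=
  ((k + m) * p / k) ^ k * ((k + m) * (1 - p) / m) ^ m

lemma klFactor_two_mul (p : ℝ) (k m : ℕ) : klFactor p (2 * k) (2 * m) = klFactor p k m ^ 2 := by
  have cancel (a b : ℝ) : (2 * (k : ℝ) + 2 * m) * a / (2 * b) = (k + m) * a / b := by
    rw [← mul_add, mul_assoc, mul_div_mul_left _ _ two_ne_zero]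
  simp only [klFactor, Nat.cast_mul, Nat.cast_ofNat, cancel]
  ring

lemma klFactor_pos (hp : p ∈ Set.Ioo 0 1) (hk : 0 < k) (hm : 0 < m) :
    0 < klFactor p k m := by
  have hp0 := hp.1
  have hq0 := sub_pos.mpr hp.2
  unfold klFactor
  positivity

lemma pow_le_exp_mul_sub_one {x : ℝ} (hx : 0 ≤ x) (k : ℕ) : x ^ k ≤ Real.exp (k * (x - 1)) := by
  rw [Real.exp_nat_mul]
  gcongr
  linarith [Real.add_one_le_exp (x - 1)]

lemma klFactor_le_one (hp : p ∈ Set.Ioo 0 1) (hk : 0 < k) (hm : 0 < m) :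
    klFactor p k m ≤ 1 := by
  have hp0 := hp.1
  have hq0 := sub_pos.mpr hp.2
  calc klFactor p k m ≤ Real.exp (k * ((k + m) * p / k - 1))
          * Real.exp (m * ((k + m) * (1 - p) / m - 1)) := by
        unfold klFactor
        gcongr <;> exact pow_le_exp_mul_sub_one (by positivity) _
    _ = 1 := by
        rw [← Real.exp_add, Real.exp_eq_one_iff]
        field_simp
        ring

-- The Kullback–Leibler divergence is at most the `χ²`-divergence.
lemma one_le_exp_mul_klFactor (hp : p ∈ Set.Ioo 0 1) (hk : 0 < k) (hm : 0 < m) :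
    1 ≤ Real.exp ((k - (k + m) * p) ^ 2 / ((k + m) * (p * (1 - p)))) * klFactor p k m := by
  have hp0 := hp.1
  have hq0 := sub_pos.mpr hp.2
  have hinv : (k / ((k + m) * p)) ^ k * (m / ((k + m) * (1 - p))) ^ m * klFactor p k m = 1 := by
    rw [klFactor, mul_mul_mul_comm, ← mul_pow, ← mul_pow]
    field_simp
    simp
  refine hinv.symm.trans_le (mul_le_mul_of_nonneg_right ?_ (klFactor_pos hp hk hm).le)
  calc (k / ((k + m) * p)) ^ k * (m / ((k + m) * (1 - p))) ^ m
      ≤ Real.exp (k * (k / ((k + m) * p) - 1))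
          * Real.exp (m * (m / ((k + m) * (1 - p)) - 1)) := by
        gcongr <;> exact pow_le_exp_mul_sub_one (by positivity) _
    _ = _ := by
        rw [← Real.exp_add]
        congr 1
        field_simp
        ring

/-- The local approximation of the binomial mass at `k` (with `n = k + m`) that Stirling's formula
gives, up to a constant factor. -/
noncomputable def localApprox (p : ℝ) (k m : ℕ) : ℝ :=
  √((k + m) / (k * m)) * klFactor p k m

lemma stirlingApprox_ratio_mul (p : ℝ) (hk : 0 < k) (hm : 0 < m) :
    stirlingApprox (k + m) / (stirlingApprox k * stirlingApprox m) * (p ^ k * (1 - p) ^ m)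
      = localApprox p k m := by
  simp only [localApprox, klFactor, stirlingApprox, div_pow, mul_pow, pow_add, Nat.cast_add]
  rw [Real.sqrt_div (by positivity), Real.sqrt_mul (by positivity)]
  field_simp

lemma localApprox_nonneg (hp : p ∈ Set.Ioo 0 1) (hk : 0 < k) (hm : 0 < m) :
    0 ≤ localApprox p k m :=
  mul_nonneg (Real.sqrt_nonneg _) (klFactor_pos hp hk hm).le

lemma binomialMass_le_localApprox (hp : p ∈ Set.Ioo 0 1) (hk : 0 < k) (hm : 0 < m) :
    binomialMass (k + m) p k ≤ 3 / 4 * localApprox p k m := by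
  have hq0 := sub_pos.mpr hp.2
  have hp0 := hp.1
  have hsk := stirlingApprox_pos hk
  have hsm := stirlingApprox_pos hm
  calc binomialMass (k + m) p k
      ≤ 3 * stirlingApprox (k + m) / (2 * stirlingApprox k * (2 * stirlingApprox m))
          * (p ^ k * (1 - p) ^ m) := by
        rw [binomialMass_add]
        have hskm := stirlingApprox_pos (Nat.add_pos_left hk m)
        gcongr
        · exact factorial_le_three_mul_stirlingApprox (Nat.add_pos_left hk m)
        · exact two_mul_stirlingApprox_le_factorial k
        · exact two_mul_stirlingApprox_le_factorial m
    _ = 3 / 4 * localApprox p k m := by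
        rw [← stirlingApprox_ratio_mul p hk hm]
        ring

lemma localApprox_le_binomialMass (hp : p ∈ Set.Ioo 0 1) (hk : 0 < k) (hm : 0 < m) :
    2 / 9 * localApprox p k m ≤ binomialMass (k + m) p k := by
  have hq0 := sub_pos.mpr hp.2
  have hp0 := hp.1
  have hsk := stirlingApprox_pos hk
  calc 2 / 9 * localApprox p k m
      = 2 * stirlingApprox (k + m) / (3 * stirlingApprox k * (3 * stirlingApprox m))
          * (p ^ k * (1 - p) ^ m) := by
        rw [← stirlingApprox_ratio_mul p hk hm]
        ring
    _ ≤ binomialMass (k + m) p k := by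
        rw [binomialMass_add]
        gcongr
        · exact two_mul_stirlingApprox_le_factorial (k + m)
        · exact factorial_le_three_mul_stirlingApprox hk
        · exact factorial_le_three_mul_stirlingApprox hm

lemma sqrt_two_mul_localApprox_two_mul (p : ℝ) (k m : ℕ) :
    √2 * localApprox p (2 * k) (2 * m) = klFactor p k m * localApprox p k m := by
  have h : (2 : ℝ) * ((((2 * k : ℕ) : ℝ) + (2 * m : ℕ)) / ((2 * k : ℕ) * (2 * m : ℕ)))
      = (k + m) / (k * m) := by
    push_cast
    field_simp
  rw [localApprox, ← mul_assoc, ← Real.sqrt_mul zero_le_two, h, klFactor_two_mul, localApprox]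
  ring

lemma binomialMass_two_mul_le (hp : p ∈ Set.Ioo 0 1) (hk : 0 < k) (hm : 0 < m) :
    binomialMass (2 * (k + m)) p (2 * k) ≤ 4 * binomialMass (k + m) p k := by
  have hupper := binomialMass_le_localApprox hp (k := 2 * k) (m := 2 * m) (by omega) (by omega)
  have hlower := localApprox_le_binomialMass hp hk hm
  have happrox : localApprox p (2 * k) (2 * m) ≤ localApprox p k m :=
    calc localApprox p (2 * k) (2 * m) ≤ √2 * localApprox p (2 * k) (2 * m) :=
          le_mul_of_one_le_left (localApprox_nonneg hp (by omega) (by omega))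
            (Real.one_le_sqrt.mpr one_le_two)
      _ = klFactor p k m * localApprox p k m := sqrt_two_mul_localApprox_two_mul p k m
      _ ≤ localApprox p k m :=
          mul_le_of_le_one_left (localApprox_nonneg hp hk hm) (klFactor_le_one hp hk hm)
  rw [mul_add]
  linarith [localApprox_nonneg hp hk hm]

lemma binomialMass_le_two_mul (hp : p ∈ Set.Ioo 0 1) (hk : 0 < k) (hm : 0 < m) :
    binomialMass (k + m) p k ≤
      7 * Real.exp ((k - (k + m) * p) ^ 2 / ((k + m) * (p * (1 - p))))
        * binomialMass (2 * (k + m)) p (2 * k) := by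
  set E := Real.exp ((k - (k + m) * p) ^ 2 / ((k + m) * (p * (1 - p))))
  have hupper := binomialMass_le_localApprox hp hk hm
  have hlower := localApprox_le_binomialMass hp (k := 2 * k) (m := 2 * m) (by omega) (by omega)
  have happrox : localApprox p k m ≤ E * (2 * localApprox p (2 * k) (2 * m)) :=
    calc localApprox p k m ≤ E * klFactor p k m * localApprox p k m :=
          le_mul_of_one_le_left (localApprox_nonneg hp hk hm) (one_le_exp_mul_klFactor hp hk hm)
      _ = E * (√2 * localApprox p (2 * k) (2 * m)) := by
          rw [sqrt_two_mul_localApprox_two_mul, mul_assoc]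
      _ ≤ E * (2 * localApprox p (2 * k) (2 * m)) := by
          gcongr
          · exact localApprox_nonneg hp (by omega) (by omega)
          · rw [Real.sqrt_le_left zero_le_two]; norm_num
  have hscaled := mul_le_mul_of_nonneg_left hlower (Real.exp_nonneg _ : 0 ≤ E)
  have hnonneg : 0 ≤ E * localApprox p (2 * k) (2 * m) :=
    mul_nonneg (Real.exp_nonneg _) (localApprox_nonneg hp (by omega) (by omega))
  rw [mul_add]
  linarith

end Binomial

lemma sum_filter_le_sum_filter_add_sum_filter {α M : Type*} [AddCommMonoid M]
    [PartialOrder M] [IsOrderedAddMonoid M] {s : Finset α} {g : α → M}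
    {P Q R : α → Prop} [DecidablePred P] [DecidablePred Q] [DecidablePred R]
    (hg : ∀ x ∈ s, 0 ≤ g x) (h : ∀ x ∈ s, P x → Q x ∨ R x) :
    ∑ x ∈ s with P x, g x ≤ ∑ x ∈ s with Q x, g x + ∑ x ∈ s with R x, g x := by
  rw [← sum_union_inter, ← filter_or, ← filter_and]
  refine le_add_of_le_of_nonneg (sum_le_sum_of_subset_of_nonneg (fun x hx => ?_) fun x hx _ => ?_)
    (sum_nonneg fun x hx => hg x (mem_filter.mp hx).1)
  · exact mem_filter.mpr ⟨(mem_filter.mp hx).1, h x (mem_filter.mp hx).1 (mem_filter.mp hx).2⟩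
  · exact hg x (mem_filter.mp hx).1

section Cube

variable {n : ℕ} {p : ℝ}

/-- The Hamming weight of a point of the cube. -/
def weight (x : Fin n → Bool) : ℕ := #{i | x i = true}

lemma weight_le (x : Fin n → Bool) : weight x ≤ n := by
  simpa [weight] using card_le_univ {i | x i = true}

lemma card_filter_eq_false (x : Fin n → Bool) : #{i | x i = false} = n - weight x := by
  have h := card_filter_add_card_filter_not (s := univ) (fun i => x i = true)
  simp only [Bool.not_eq_true, card_univ, Fintype.card_fin] at h
  unfold weight
  omega

lemma card_filter_weight_eq (n k : ℕ) : #{x : Fin n → Bool | weight x = k} = n.choose k := by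
  have hchoose : n.choose k = #(powersetCard k (univ : Finset (Fin n))) := by simp
  rw [hchoose]
  refine card_nbij' (fun x => ({i | x i = true} : Finset (Fin n))) (fun s i => decide (i ∈ s))
    (fun x hx => mem_powersetCard.mpr ⟨subset_univ _, (mem_filter.mp hx).2⟩)
    (fun s hs => mem_filter.mpr ⟨mem_univ _, ?_⟩) (fun x _ => ?_) (fun s _ => ?_)
  · simpa [weight] using (mem_powersetCard.mp hs).2
  · ext i
    simp
  · ext i
    simp

lemma exists_perm_of_weight_eq {x x' : Fin n → Bool} (h : weight x = weight x') :
    ∃ σ : Equiv.Perm (Fin n), x = x' ∘ σ := by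
  have hcard : Fintype.card {i // x i = true} = Fintype.card {i // x' i = true} := by
    simpa only [Fintype.card_subtype, weight] using h
  let e : {i // x i = true} ≃ {i // x' i = true} := Fintype.equivOfCardEq hcard
  refine ⟨e.extendSubtype, funext fun i => Bool.eq_iff_iff.mpr ⟨e.extendSubtype_mem i, ?_⟩⟩
  exact not_imp_not.mp (e.extendSubtype_not_mem i)

lemma mu_eq_pow_weight (p : ℝ) (x : Fin n → Bool) :
    mu p x = p ^ weight x * (1 - p) ^ (n - weight x) := by
  rw [← card_filter_eq_false]
  simp [mu, w, weight, prod_ite]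

lemma mu_nonneg (hp : p ∈ Set.Icc 0 1) (x : Fin n → Bool) : 0 ≤ mu p x := by
  have hp0 := hp.1
  have hq0 := sub_nonneg.mpr hp.2
  rw [mu_eq_pow_weight]
  positivity

lemma sum_mu (n : ℕ) (p : ℝ) : ∑ x : Fin n → Bool, mu p x = 1 := by
  have h := (prod_univ_sum (fun _ : Fin n => univ) fun _ => w p).symm
  rw [Fintype.piFinset_univ] at h
  simpa [mu, w] using h

lemma mu_mul_choose_weight (p : ℝ) (x : Fin n → Bool) :
    mu p x * n.choose (weight x) = binomialMass n p (weight x) := by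
  rw [mu_eq_pow_weight, binomialMass]
  ring

lemma sum_mu_weight_eq (n : ℕ) (p : ℝ) (k : ℕ) :
    ∑ x : Fin n → Bool with weight x = k, mu p x = binomialMass n p k := by
  rw [sum_congr rfl (g := fun _ => p ^ k * (1 - p) ^ (n - k)) fun x hx => ?_]
  · rw [sum_const, card_filter_weight_eq, nsmul_eq_mul, binomialMass, mul_assoc]
  · rw [mu_eq_pow_weight, (mem_filter.mp hx).2]

lemma sum_comp_weight_mul_mu (p : ℝ) (g : ℕ → ℝ) :
    ∑ x : Fin n → Bool, g (weight x) * mu p x = ∑ k ∈ range (n + 1), g k * binomialMass n p k := by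
  rw [← sum_fiberwise_of_maps_to (t := range (n + 1)) (g := weight)
    (fun x _ => mem_range.mpr (Nat.lt_succ_of_le (weight_le x)))]
  refine sum_congr rfl fun k _ => ?_
  rw [← sum_mu_weight_eq, mul_sum]
  exact sum_congr rfl fun x hx => by rw [(mem_filter.mp hx).2]

lemma sum_mu_tail_le (hp : p ∈ Set.Icc 0 1) {t : ℝ} (ht : 0 < t) :
    ∑ x : Fin n → Bool with t < |weight x - n * p|, mu p x ≤ n * p * (1 - p) / t ^ 2 := by
  rw [le_div_iff₀' (by positivity), ← sum_sq_mul_binomialMass,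
    ← sum_comp_weight_mul_mu p fun k => ((k : ℝ) - n * p) ^ 2, mul_sum]
  refine (sum_le_sum fun x hx => ?_).trans (sum_le_sum_of_subset_of_nonneg (filter_subset _ _)
    fun x _ _ => mul_nonneg (sq_nonneg _) (mu_nonneg hp x))
  refine mul_le_mul_of_nonneg_right ?_ (mu_nonneg hp x)
  rw [← sq_abs (_ - _)]
  exact pow_le_pow_left₀ ht.le (mem_filter.mp hx).2.le 2

lemma bflip_bflip (x : Fin n → Bool) (i : Fin n) : bflip (bflip x i) i = x := by
  simp [bflip]

lemma bflip_apply_of_ne (x : Fin n → Bool) {i j : Fin n} (h : j ≠ i) : bflip x i j = x j :=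
  Function.update_of_ne h _ _

lemma even_weight_bflip (x : Fin n → Bool) (i : Fin n) :
    Even (weight (bflip x i)) ↔ ¬ Even (weight x) := by
  have hsplit (z : Fin n → Bool) : weight z
      = (if z i = true then 1 else 0) + ∑ j ∈ univ.erase i, if z j = true then 1 else 0 := by
    rw [weight, card_filter, add_sum_erase _ (fun j => if z j = true then 1 else 0) (mem_univ i)]
  have hrest : ∑ j ∈ univ.erase i, (if bflip x i j = true then 1 else 0)
      = ∑ j ∈ univ.erase i, if x j = true then 1 else 0 :=
    sum_congr rfl fun j hj => by rw [bflip_apply_of_ne x (ne_of_mem_erase hj)]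
  rw [hsplit x, hsplit (bflip x i), hrest]
  cases hx : x i <;> simp [bflip, hx, parity_simps]

lemma mul_mu_le_mu_bflip (hp : p ∈ Set.Icc 0 1) (x : Fin n → Bool) (i : Fin n) :
    p * (1 - p) * mu p x ≤ mu p (bflip x i) := by
  obtain ⟨hp0, hp1⟩ := hp
  have hw (b : Bool) : p * (1 - p) * w p b ≤ w p (!b) := by
    cases b <;> simp only [w, Bool.not_true, Bool.not_false, Bool.false_eq_true, if_true, if_false]
      <;> nlinarith [mul_nonneg hp0 (sub_nonneg.mpr hp1)]
  have hrest : ∏ j ∈ univ.erase i, w p (bflip x i j) = ∏ j ∈ univ.erase i, w p (x j) :=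
    prod_congr rfl fun j hj => by rw [bflip_apply_of_ne x (ne_of_mem_erase hj)]
  have hnonneg : 0 ≤ ∏ j ∈ univ.erase i, w p (x j) := prod_nonneg fun j _ => by
    unfold w
    split_ifs <;> linarith
  rw [mu, mu, ← mul_prod_erase _ (fun j => w p (x j)) (mem_univ i),
    ← mul_prod_erase _ (fun j => w p (bflip x i j)) (mem_univ i), hrest, ← mul_assoc]
  exact mul_le_mul_of_nonneg_right (by simpa [bflip] using hw (x i)) hnonneg

lemma mul_sum_mu_comp_bflip_le (hp : p ∈ Set.Icc 0 1) (i : Fin n)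
    (P : (Fin n → Bool) → Prop) [DecidablePred P] :
    p * (1 - p) * ∑ x with P (bflip x i), mu p x ≤ ∑ x with P x, mu p x := by
  rw [mul_sum]
  calc ∑ x with P (bflip x i), p * (1 - p) * mu p x
      ≤ ∑ x with P (bflip x i), mu p (bflip x i) :=
        sum_le_sum fun x _ => mul_mu_le_mu_bflip hp x i
    _ = ∑ x with P x, mu p x :=
        sum_nbij' (bflip · i) (bflip · i) (by simp) (by simp [bflip_bflip])
          (fun x _ => bflip_bflip x i) (fun x _ => bflip_bflip x i) (fun _ _ => rfl)

/-- The `mu p`-probability that flipping the coordinate `i` changes the value of `f`, that is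
`pinf p f i` without the factor `p * (1 - p)`. -/
noncomputable def flipProb (p : ℝ) (f : (Fin n → Bool) → Bool) (i : Fin n) : ℝ :=
  ∑ x with f x ≠ f (bflip x i), mu p x

lemma pinf_eq_mul_flipProb (p : ℝ) (f : (Fin n → Bool) → Bool) (i : Fin n) :
    pinf p f i = p * (1 - p) * flipProb p f i := by
  rw [pinf, flipProb, sum_filter]

lemma totalInf_eq_mul_sum_flipProb (p : ℝ) (f : (Fin n → Bool) → Bool) :
    totalInf p f = p * (1 - p) * ∑ i, flipProb p f i := by
  simp only [totalInf, pinf_eq_mul_flipProb, mul_sum]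

lemma flipProb_nonneg (hp : p ∈ Set.Icc 0 1) (f : (Fin n → Bool) → Bool) (i : Fin n) :
    0 ≤ flipProb p f i :=
  sum_nonneg fun x _ => mu_nonneg hp x

lemma flipProb_le_one (hp : p ∈ Set.Icc 0 1) (f : (Fin n → Bool) → Bool) (i : Fin n) :
    flipProb p f i ≤ 1 :=
  (sum_mu n p).symm ▸ sum_le_sum_of_subset_of_nonneg (filter_subset _ _)
    fun x _ _ => mu_nonneg hp x

-- Flipping the coordinate `i` exchanges the sensitive points of even and of odd weight.
lemma pinf_le_two_mul_sum_even (hp : p ∈ Set.Icc 0 1) (f : (Fin n → Bool) → Bool) (i : Fin n) :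
    pinf p f i ≤ 2 * ∑ x with f x ≠ f (bflip x i) ∧ Even (weight x), mu p x := by
  set P : (Fin n → Bool) → Prop := fun x => f x ≠ f (bflip x i) ∧ Even (weight x)
  have hsplit : flipProb p f i ≤ ∑ x with P x, mu p x + ∑ x with P (bflip x i), mu p x :=
    sum_filter_le_sum_filter_add_sum_filter (fun x _ => mu_nonneg hp x) fun x _ hx => by
      simp only [P, bflip_bflip, even_weight_bflip, hx, hx.symm, ne_eq, not_false_eq_true,
        true_and, Classical.em]
  have hflip := mul_sum_mu_comp_bflip_le hp i P
  have heven : 0 ≤ ∑ x with P x, mu p x := sum_nonneg fun x _ => mu_nonneg hp x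
  have hv0 : 0 ≤ p * (1 - p) := mul_nonneg hp.1 (sub_nonneg.mpr hp.2)
  have hv1 : p * (1 - p) ≤ 1 := mul_le_one₀ hp.2 (sub_nonneg.mpr hp.2) (sub_le_self 1 hp.1)
  calc pinf p f i = p * (1 - p) * flipProb p f i := pinf_eq_mul_flipProb p f i
    _ ≤ p * (1 - p) * ∑ x with P x, mu p x + p * (1 - p) * ∑ x with P (bflip x i), mu p x :=
        (mul_le_mul_of_nonneg_left hsplit hv0).trans_eq (mul_add _ _ _)
    _ ≤ ∑ x with P x, mu p x + ∑ x with P x, mu p x :=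
        add_le_add (mul_le_of_le_one_left heven hv1) hflip
    _ = 2 * ∑ x with P x, mu p x := (two_mul _).symm

end Cube

section TwoToOne

variable {n : ℕ}

/-- The sample space of the random minor: all 2-to-1 maps `[2n] → [n]`. -/
noncomputable def twoToOneMaps (n : ℕ) : Finset (Fin (2 * n) → Fin n) :=
  {π | IsTwoToOne π}

lemma mem_twoToOneMaps {π : Fin (2 * n) → Fin n} : π ∈ twoToOneMaps n ↔ IsTwoToOne π := by
  simp [twoToOneMaps]

lemma twoToOneMaps_nonempty (n : ℕ) : (twoToOneMaps n).Nonempty := by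
  refine ⟨fun i => (finProdFinEquiv.symm i).2, mem_twoToOneMaps.mpr fun j => ?_⟩
  rw [← Fintype.card_fin 2, ← card_univ]
  refine card_nbij' (fun i => (finProdFinEquiv.symm i).1) (fun a => finProdFinEquiv (a, j))
    (fun i _ => mem_univ _) (fun a _ => ?_) (fun i hi => ?_) (fun a _ => ?_)
  · simp only [coe_filter, mem_univ, true_and, Set.mem_ofPred_eq, Equiv.symm_apply_apply]
  · rw [← (mem_filter.mp hi).2]
    exact finProdFinEquiv.apply_symm_apply i
  · simp only [Equiv.symm_apply_apply]

lemma IsTwoToOne.comp_perm {π : Fin (2 * n) → Fin n} (h : IsTwoToOne π)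
    (σ : Equiv.Perm (Fin (2 * n))) : IsTwoToOne (π ∘ σ) := fun j =>
  (card_equiv σ (by simp)).trans (h j)

lemma expect_twoToOneMaps_comp_perm (σ : Equiv.Perm (Fin (2 * n)))
    (g : (Fin (2 * n) → Fin n) → ℝ) :
    𝔼 π ∈ twoToOneMaps n, g (π ∘ σ) = 𝔼 π ∈ twoToOneMaps n, g π :=
  expect_nbij' (· ∘ σ) (· ∘ σ.symm)
    (fun _ h => mem_twoToOneMaps.mpr ((mem_twoToOneMaps.mp h).comp_perm σ))
    (fun _ h => mem_twoToOneMaps.mpr ((mem_twoToOneMaps.mp h).comp_perm σ.symm))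
    (fun _ _ => by ext; simp) (fun _ _ => by ext; simp) (fun _ _ => rfl)

lemma IsTwoToOne.weight_comp {π : Fin (2 * n) → Fin n} (h : IsTwoToOne π) (y : Fin n → Bool) :
    weight (y ∘ π) = 2 * weight y :=
  calc weight (y ∘ π) = ∑ j with y j = true, #{i | π i = j} := by
        rw [weight, card_eq_sum_card_fiberwise (f := π) (t := {j | y j = true})
          (by simp [Set.MapsTo])]
        refine sum_congr rfl fun j hj => ?_
        rw [filter_filter]
        congr 1
        ext i
        have hyj := (mem_filter.mp hj).2
        simp +contextual [hyj]
    _ = 2 * weight y := by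
        rw [sum_congr rfl fun j _ => h j, sum_const, smul_eq_mul, mul_comm, weight]

lemma IsTwoToOne.card_partners {π : Fin (2 * n) → Fin n} (h : IsTwoToOne π) (i : Fin (2 * n)) :
    #{j ∈ univ.erase i | π j = π i} = 1 := by
  rw [filter_erase, card_erase_of_mem (by simp), h (π i)]

lemma IsTwoToOne.exists_partner {π : Fin (2 * n) → Fin n} (h : IsTwoToOne π) (i : Fin (2 * n)) :
    ∃ j ≠ i, π j = π i := by
  obtain ⟨j, hj⟩ := card_pos.mp ((h.card_partners i).symm ▸ one_pos)
  exact ⟨j, ne_of_mem_erase (mem_filter.mp hj).1, (mem_filter.mp hj).2⟩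

lemma IsTwoToOne.eq_or_eq_of_apply_eq {π : Fin (2 * n) → Fin n} (h : IsTwoToOne π)
    {i j k : Fin (2 * n)} (hji : j ≠ i) (hj : π j = π i) (hk : π k = π i) : k = i ∨ k = j := by
  by_contra! hne
  have hlt : 1 < #{l ∈ univ.erase i | π l = π i} :=
    one_lt_card.mpr ⟨j, by simp [hji, hj], k, by simp [hne.1, hk], hne.2.symm⟩
  exact hlt.ne' (h.card_partners i)

lemma IsTwoToOne.bflip_comp {π : Fin (2 * n) → Fin n} (h : IsTwoToOne π) {i j : Fin (2 * n)}
    (hji : j ≠ i) (hj : π j = π i) (y : Fin n → Bool) :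
    bflip y (π i) ∘ π = bflip (bflip (y ∘ π) i) j := by
  funext k
  by_cases hk : π k = π i
  · rcases h.eq_or_eq_of_apply_eq hji hj hk with rfl | rfl
    · simp [bflip, hji.symm]
    · simp [bflip, hji, hj]
  · have hki : k ≠ i := fun hki => hk (congrArg π hki)
    have hkj : k ≠ j := fun hkj => hk ((congrArg π hkj).trans hj)
    rw [Function.comp_apply, bflip_apply_of_ne _ hk, bflip_apply_of_ne _ hkj,
      bflip_apply_of_ne _ hki, Function.comp_apply]

end TwoToOne

section LiftLaw

variable {m n : ℕ} {p : ℝ}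

/-- The law of the lift `y ∘ π` of a `mu p`-random point `y`: its mass at `x`. -/
noncomputable def liftLaw (p : ℝ) (π : Fin m → Fin n) (x : Fin m → Bool) : ℝ :=
  ∑ y with y ∘ π = x, mu p y

lemma sum_liftLaw (p : ℝ) (π : Fin m → Fin n) (P : (Fin m → Bool) → Prop) [DecidablePred P] :
    ∑ x with P x, liftLaw p π x = ∑ y with P (y ∘ π), mu p y := by
  simp only [liftLaw]
  rw [sum_fiberwise_eq_sum_filter]
  simp only [mem_filter, mem_univ, true_and]

lemma liftLaw_nonneg (hp : p ∈ Set.Icc 0 1) (π : Fin m → Fin n) (x : Fin m → Bool) :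
    0 ≤ liftLaw p π x :=
  sum_nonneg fun y _ => mu_nonneg hp y

lemma liftLaw_comp_perm (p : ℝ) (π : Fin m → Fin n) (x : Fin m → Bool) (σ : Equiv.Perm (Fin m)) :
    liftLaw p (π ∘ σ) (x ∘ σ) = liftLaw p π x := by
  simp only [liftLaw, ← Function.comp_assoc, σ.surjective.right_cancellable]

/-- The law of `y ∘ π` for a `mu p`-random point `y` and an independent uniformly random
2-to-1 map `π`. -/
noncomputable def meanLiftLaw (p : ℝ) (x : Fin (2 * n) → Bool) : ℝ :=
  𝔼 π ∈ twoToOneMaps n, liftLaw p π x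

lemma meanLiftLaw_nonneg (hp : p ∈ Set.Icc 0 1) (x : Fin (2 * n) → Bool) :
    0 ≤ meanLiftLaw p x :=
  expect_nonneg fun π _ => liftLaw_nonneg hp π x

lemma meanLiftLaw_eq_zero_of_odd (p : ℝ) {x : Fin (2 * n) → Bool} (hx : ¬ Even (weight x)) :
    meanLiftLaw p x = 0 := by
  refine expect_eq_zero fun π hπ => sum_eq_zero fun y hy => absurd ?_ hx
  rw [← (mem_filter.mp hy).2, (mem_twoToOneMaps.mp hπ).weight_comp]
  exact even_two_mul _

lemma meanLiftLaw_comp_perm (p : ℝ) (x : Fin (2 * n) → Bool) (σ : Equiv.Perm (Fin (2 * n))) :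
    meanLiftLaw p (x ∘ σ) = meanLiftLaw p x := by
  rw [meanLiftLaw, ← expect_twoToOneMaps_comp_perm σ]
  exact expect_congr rfl fun π _ => liftLaw_comp_perm p π x σ

lemma meanLiftLaw_mul_choose (p : ℝ) {x : Fin (2 * n) → Bool} {k : ℕ} (hx : weight x = 2 * k) :
    meanLiftLaw p x * (2 * n).choose (2 * k) = binomialMass n p k :=
  calc meanLiftLaw p x * (2 * n).choose (2 * k)
      = ∑ x' : Fin (2 * n) → Bool with weight x' = 2 * k, meanLiftLaw p x' := by
        rw [sum_congr rfl (g := fun _ => meanLiftLaw p x) fun x' hx' => ?_]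
        · rw [sum_const, card_filter_weight_eq, nsmul_eq_mul, mul_comm]
        · obtain ⟨σ, rfl⟩ := exists_perm_of_weight_eq ((mem_filter.mp hx').2.trans hx.symm)
          exact meanLiftLaw_comp_perm p x σ
    _ = 𝔼 π ∈ twoToOneMaps n, ∑ y with weight (y ∘ π) = 2 * k, mu p y := by
        simp only [meanLiftLaw, ← expect_sum_comm, sum_liftLaw]
    _ = 𝔼 _π ∈ twoToOneMaps n, binomialMass n p k := by
        refine expect_congr rfl fun π hπ => ?_
        simp only [(mem_twoToOneMaps.mp hπ).weight_comp, ← sum_mu_weight_eq,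
          mul_right_inj' two_ne_zero]
    _ = binomialMass n p k := expect_const (twoToOneMaps_nonempty n) _

lemma mu_le_four_mul_meanLiftLaw (hp : p ∈ Set.Ioo 0 1) {x : Fin (2 * n) → Bool}
    (heven : Even (weight x)) (hpos : 0 < weight x) (hlt : weight x < 2 * n) :
    mu p x ≤ 4 * meanLiftLaw p x := by
  obtain ⟨k, hk⟩ := heven.two_dvd
  obtain ⟨m, rfl⟩ : ∃ m, n = k + m := ⟨n - k, by omega⟩
  have hchoose : (0 : ℝ) < (2 * (k + m)).choose (2 * k) :=
    Nat.cast_pos.mpr (Nat.choose_pos (by omega))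
  refine le_of_mul_le_mul_right ?_ hchoose
  rw [mul_assoc, meanLiftLaw_mul_choose p hk, ← hk, mu_mul_choose_weight, hk]
  exact binomialMass_two_mul_le hp (by omega) (by omega)

lemma meanLiftLaw_le_mul_mu (hp : p ∈ Set.Ioo 0 1) {x : Fin (2 * n) → Bool}
    (hpos : 0 < weight x) (hlt : weight x < 2 * n) :
    meanLiftLaw p x ≤
      7 * Real.exp ((weight x - 2 * n * p) ^ 2 / (4 * (n * (p * (1 - p))))) * mu p x := by
  by_cases heven : Even (weight x)
  · obtain ⟨k, hk⟩ := heven.two_dvd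
    obtain ⟨m, rfl⟩ : ∃ m, n = k + m := ⟨n - k, by omega⟩
    have hchoose : (0 : ℝ) < (2 * (k + m)).choose (2 * k) :=
      Nat.cast_pos.mpr (Nat.choose_pos (by omega))
    have hexponent : ((weight x : ℝ) - 2 * (k + m : ℕ) * p) ^ 2
          / (4 * ((k + m : ℕ) * (p * (1 - p))))
        = (k - (k + m) * p) ^ 2 / ((k + m) * (p * (1 - p))) := by
      rw [hk, ← mul_div_mul_left _ ((k + m) * (p * (1 - p))) (four_ne_zero' ℝ)]
      push_cast
      ring
    refine le_of_mul_le_mul_right ?_ hchoose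
    rw [hexponent, mul_assoc _ (mu p x), meanLiftLaw_mul_choose p hk, ← hk, mu_mul_choose_weight,
      hk]
    exact binomialMass_le_two_mul hp (by omega) (by omega)
  · rw [meanLiftLaw_eq_zero_of_odd p heven]
    exact mul_nonneg (by positivity) (mu_nonneg (Set.Ioo_subset_Icc_self hp) x)

/-- The part of `meanLiftLaw p` carried by the maps `π` that pair the coordinates `i` and `j`. -/
noncomputable def pairedLiftLaw (p : ℝ) (i j : Fin (2 * n)) (x : Fin (2 * n) → Bool) : ℝ :=
  𝔼 π ∈ twoToOneMaps n, if π j = π i then liftLaw p π x else 0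

lemma pairedLiftLaw_nonneg (hp : p ∈ Set.Icc 0 1) (i j : Fin (2 * n)) (x : Fin (2 * n) → Bool) :
    0 ≤ pairedLiftLaw p i j x :=
  expect_nonneg fun π _ => ite_nonneg (liftLaw_nonneg hp π x) le_rfl

lemma sum_pairedLiftLaw (p : ℝ) (i : Fin (2 * n)) (x : Fin (2 * n) → Bool) :
    ∑ j ∈ univ.erase i, pairedLiftLaw p i j x = meanLiftLaw p x := by
  simp only [pairedLiftLaw]
  rw [← expect_sum_comm]
  refine expect_congr rfl fun π hπ => ?_
  rw [← sum_filter, sum_const, (mem_twoToOneMaps.mp hπ).card_partners, one_smul]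

lemma pairedLiftLaw_eq_zero_of_ne (p : ℝ) {i j : Fin (2 * n)} {x : Fin (2 * n) → Bool}
    (hx : x j ≠ x i) : pairedLiftLaw p i j x = 0 := by
  refine expect_eq_zero fun π _ => ite_eq_right_iff.mpr fun hπ => sum_eq_zero fun y hy => ?_
  refine absurd ?_ hx
  rw [← (mem_filter.mp hy).2, Function.comp_apply, Function.comp_apply, hπ]

lemma pairedLiftLaw_congr (p : ℝ) {i j k : Fin (2 * n)} (hj : j ≠ i) (hk : k ≠ i)
    {x : Fin (2 * n) → Bool} (hx : x j = x k) : pairedLiftLaw p i j x = pairedLiftLaw p i k x := by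
  have hswap : x ∘ Equiv.swap j k = x := by
    rw [Equiv.comp_swap_eq_update, hx, Function.update_eq_self, ← hx, Function.update_eq_self]
  rw [pairedLiftLaw, ← expect_twoToOneMaps_comp_perm (Equiv.swap j k)]
  refine expect_congr rfl fun π _ => ?_
  have hlaw := liftLaw_comp_perm p π x (Equiv.swap j k)
  rw [hswap] at hlaw
  rw [Function.comp_apply, Function.comp_apply, Equiv.swap_apply_left,
    Equiv.swap_apply_of_ne_of_ne hj.symm hk.symm, hlaw]

-- The partner of `i` is uniformly distributed over the `j ≠ i` with `x j = x i`.
lemma card_mul_pairedLiftLaw_le (hp : p ∈ Set.Icc 0 1) {i j : Fin (2 * n)} (hj : j ≠ i)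
    (x : Fin (2 * n) → Bool) :
    #{k ∈ univ.erase i | x k = x i} * pairedLiftLaw p i j x ≤ meanLiftLaw p x := by
  by_cases hx : x j = x i
  · calc #{k ∈ univ.erase i | x k = x i} * pairedLiftLaw p i j x
        = ∑ k ∈ univ.erase i with x k = x i, pairedLiftLaw p i k x := by
          rw [← nsmul_eq_mul, ← sum_const]
          refine sum_congr rfl fun k hk => ?_
          obtain ⟨hki, hxk⟩ := mem_filter.mp hk
          exact pairedLiftLaw_congr p hj (ne_of_mem_erase hki) (hx.trans hxk.symm)
      _ ≤ ∑ k ∈ univ.erase i, pairedLiftLaw p i k x :=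
          sum_le_sum_of_subset_of_nonneg (filter_subset _ _)
            fun k _ _ => pairedLiftLaw_nonneg hp i k x
      _ = meanLiftLaw p x := sum_pairedLiftLaw p i x
  · rw [pairedLiftLaw_eq_zero_of_ne p hx, mul_zero]
    exact meanLiftLaw_nonneg hp x

lemma min_weight_le_card_partners (x : Fin n → Bool) (i : Fin n) :
    min (weight x) (n - weight x) ≤ #{k ∈ univ.erase i | x k = x i} + 1 := by
  rw [filter_erase, card_erase_add_one (by simp)]
  cases hx : x i
  · exact (card_filter_eq_false x).symm ▸ min_le_right _ _
  · exact min_le_left _ _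

end LiftLaw

section Slab

variable {n : ℕ} {p t : ℝ}

/-- The points of the cube whose Hamming weight differs by at most `t` from its mean `n * p`
under `mu p`. -/
noncomputable def centralSlab (n : ℕ) (p t : ℝ) : Finset (Fin n → Bool) :=
  {x | |(weight x : ℝ) - n * p| ≤ t}

lemma mem_centralSlab {x : Fin n → Bool} :
    x ∈ centralSlab n p t ↔ |(weight x : ℝ) - n * p| ≤ t := by
  simp [centralSlab]

lemma sum_mu_compl_centralSlab_le (hp : p ∈ Set.Icc 0 1) (ht : 0 < t) :
    ∑ x with x ∉ centralSlab n p t, mu p x ≤ n * (p * (1 - p)) / t ^ 2 := by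
  simpa only [mem_centralSlab, not_le, mul_assoc] using sum_mu_tail_le hp ht

lemma mul_le_weight_of_mem_centralSlab (ht : t ≤ n * (p * (1 - p)))
    {x : Fin (2 * n) → Bool} (hx : x ∈ centralSlab (2 * n) p t) :
    n * (p * (1 - p)) ≤ weight x ∧ weight x + n * (p * (1 - p)) ≤ 2 * n := by
  obtain ⟨hlow, hhigh⟩ := abs_le.mp (mem_centralSlab.mp hx)
  push_cast at hlow hhigh
  have hsq : (0 : ℝ) ≤ n * p ^ 2 := by positivity
  have hsq' : (0 : ℝ) ≤ n * (1 - p) ^ 2 := by positivity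
  constructor <;> nlinarith

/-- The factor by which `meanLiftLaw p` may exceed `mu p` on the central slab of radius `t`. -/
noncomputable def densityBound (n : ℕ) (p t : ℝ) : ℝ :=
  7 * Real.exp (t ^ 2 / (4 * (n * (p * (1 - p)))))

lemma densityBound_pos (n : ℕ) (p t : ℝ) : 0 < densityBound n p t := by
  unfold densityBound
  positivity

lemma weight_pos_and_lt_of_mem_centralSlab (hn : 0 < n * (p * (1 - p)))
    (ht : t ≤ n * (p * (1 - p))) {x : Fin (2 * n) → Bool} (hx : x ∈ centralSlab (2 * n) p t) :
    0 < weight x ∧ weight x < 2 * n := by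
  obtain ⟨hlow, hhigh⟩ := mul_le_weight_of_mem_centralSlab ht hx
  have hlt : (weight x : ℝ) < 2 * n := by linarith
  exact ⟨Nat.cast_pos.mp (hn.trans_le hlow), by exact_mod_cast hlt⟩

lemma meanLiftLaw_le_densityBound_mul_mu (hp : p ∈ Set.Ioo 0 1) (hn : 0 < n * (p * (1 - p)))
    (ht : t ≤ n * (p * (1 - p))) {x : Fin (2 * n) → Bool} (hx : x ∈ centralSlab (2 * n) p t) :
    meanLiftLaw p x ≤ densityBound n p t * mu p x := by
  have hp' := Set.Ioo_subset_Icc_self hp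
  obtain ⟨hpos, hlt⟩ := weight_pos_and_lt_of_mem_centralSlab hn ht hx
  have hdev := mem_centralSlab.mp hx
  push_cast at hdev
  refine (meanLiftLaw_le_mul_mu hp hpos hlt).trans
    (mul_le_mul_of_nonneg_right ?_ (mu_nonneg hp' x))
  unfold densityBound
  gcongr 7 * Real.exp (?_ / _)
  exact sq_le_sq' (abs_le.mp hdev).1 (abs_le.mp hdev).2

lemma pairedLiftLaw_le_mul_mu (hp : p ∈ Set.Ioo 0 1) (hn : 2 ≤ n * (p * (1 - p)))
    (ht : t ≤ n * (p * (1 - p))) {x : Fin (2 * n) → Bool} (hx : x ∈ centralSlab (2 * n) p t)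
    {i j : Fin (2 * n)} (hj : j ≠ i) :
    pairedLiftLaw p i j x ≤ 2 * densityBound n p t / (n * (p * (1 - p))) * mu p x := by
  have hp' := Set.Ioo_subset_Icc_self hp
  obtain ⟨hlow, hhigh⟩ := mul_le_weight_of_mem_centralSlab ht hx
  have hpartners : n * (p * (1 - p)) / 2 ≤ #{k ∈ univ.erase i | x k = x i} := by
    have hmin : (min (weight x) (2 * n - weight x) : ℝ) ≤ #{k ∈ univ.erase i | x k = x i} + 1 := by
      have h := min_weight_le_card_partners x i
      rify [weight_le x] at h
      exact h
    linarith [(le_min hlow (le_sub_iff_add_le'.mpr hhigh)).trans hmin]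
  have hpair : n * (p * (1 - p)) / 2 * pairedLiftLaw p i j x ≤ densityBound n p t * mu p x :=
    calc n * (p * (1 - p)) / 2 * pairedLiftLaw p i j x
        ≤ #{k ∈ univ.erase i | x k = x i} * pairedLiftLaw p i j x :=
          mul_le_mul_of_nonneg_right hpartners (pairedLiftLaw_nonneg hp' i j x)
      _ ≤ meanLiftLaw p x := card_mul_pairedLiftLaw_le hp' hj x
      _ ≤ densityBound n p t * mu p x :=
          meanLiftLaw_le_densityBound_mul_mu hp (two_pos.trans_le hn) ht hx
  rw [div_mul_eq_mul_div, le_div_iff₀ (two_pos.trans_le hn)]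
  linarith

end Slab

section Minor

variable {n : ℕ} {p : ℝ}

-- Flipping `π i` in the minor flips `i` and its partner `j` in `f`; this telescopes.
lemma sum_liftLaw_le_flipProb_minor_add (hp : p ∈ Set.Icc 0 1) {π : Fin (2 * n) → Fin n}
    (hπ : IsTwoToOne π) {i j : Fin (2 * n)} (hji : j ≠ i) (hj : π j = π i)
    (f : (Fin (2 * n) → Bool) → Bool) (S : Finset (Fin (2 * n) → Bool)) :
    ∑ x ∈ S with f x ≠ f (bflip x i), liftLaw p π x
      ≤ flipProb p (fun y => f (y ∘ π)) (π i)
        + ∑ x ∈ S with f (bflip x i) ≠ f (bflip (bflip x i) j), liftLaw p π x := by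
  have hminor : flipProb p (fun y => f (y ∘ π)) (π i)
      = ∑ x with f x ≠ f (bflip (bflip x i) j), liftLaw p π x := by
    rw [flipProb, sum_liftLaw]
    simp only [hπ.bflip_comp hji hj]
  have hnonneg (x : Fin (2 * n) → Bool) : 0 ≤ liftLaw p π x := liftLaw_nonneg hp π x
  calc ∑ x ∈ S with f x ≠ f (bflip x i), liftLaw p π x
      ≤ ∑ x ∈ S with f x ≠ f (bflip (bflip x i) j), liftLaw p π x
        + ∑ x ∈ S with f (bflip x i) ≠ f (bflip (bflip x i) j), liftLaw p π x :=
        sum_filter_le_sum_filter_add_sum_filter (fun x _ => hnonneg x) fun x _ hx => by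
          by_contra! h
          exact hx (h.1.trans h.2.symm)
    _ ≤ _ := by
        rw [hminor]
        gcongr ?_ + _
        exact sum_le_sum_of_subset_of_nonneg (filter_subset_filter _ (subset_univ S))
          fun x _ _ => hnonneg x

lemma sum_meanLiftLaw_le_expect_flipProb_add (hp : p ∈ Set.Icc 0 1)
    (f : (Fin (2 * n) → Bool) → Bool) (i : Fin (2 * n)) (S : Finset (Fin (2 * n) → Bool)) :
    ∑ x ∈ S with f x ≠ f (bflip x i), meanLiftLaw p x
      ≤ (𝔼 π ∈ twoToOneMaps n, flipProb p (fun y => f (y ∘ π)) (π i))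
        + ∑ j ∈ univ.erase i, ∑ x ∈ S with f (bflip x i) ≠ f (bflip (bflip x i) j),
            pairedLiftLaw p i j x := by
  simp only [meanLiftLaw, pairedLiftLaw, ← expect_sum_comm, ← expect_add_distrib]
  refine expect_le_expect fun π hπ => ?_
  obtain ⟨j, hji, hj⟩ := (mem_twoToOneMaps.mp hπ).exists_partner i
  have hpair := sum_liftLaw_le_flipProb_minor_add hp (mem_twoToOneMaps.mp hπ) hji hj f S
  refine hpair.trans (add_le_add_right ?_ _)
  refine le_trans ?_ (single_le_sum (fun k _ => sum_nonneg fun x _ => ?_)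
    (mem_erase.mpr ⟨hji, mem_univ j⟩))
  · simp only [hj, if_true, le_refl]
  · exact ite_nonneg (liftLaw_nonneg hp π x) le_rfl

lemma sum_pairedLiftLaw_centralSlab_le (hp : p ∈ Set.Ioo 0 1) {t : ℝ}
    (hn : 2 ≤ n * (p * (1 - p))) (ht : t ≤ n * (p * (1 - p)))
    (f : (Fin (2 * n) → Bool) → Bool) (i : Fin (2 * n)) :
    ∑ j ∈ univ.erase i, ∑ x ∈ centralSlab (2 * n) p t
        with f (bflip x i) ≠ f (bflip (bflip x i) j), pairedLiftLaw p i j x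
      ≤ 2 * densityBound n p t / (n * (p * (1 - p)) ^ 3) * totalInf p f := by
  have hp' := Set.Ioo_subset_Icc_self hp
  have hv : 0 < p * (1 - p) := mul_pos hp.1 (sub_pos.mpr hp.2)
  have hL := densityBound_pos n p t
  set c := 2 * densityBound n p t / (n * (p * (1 - p)))
  have hc : 0 ≤ c := by positivity
  have hbound (j : Fin (2 * n)) (hj : j ∈ univ.erase i) :
      ∑ x ∈ centralSlab (2 * n) p t with f (bflip x i) ≠ f (bflip (bflip x i) j),
        pairedLiftLaw p i j x ≤ c * (flipProb p f j / (p * (1 - p))) :=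
    calc _ ≤ ∑ x ∈ centralSlab (2 * n) p t with f (bflip x i) ≠ f (bflip (bflip x i) j),
          c * mu p x :=
          sum_le_sum fun x hx =>
            pairedLiftLaw_le_mul_mu hp hn ht (mem_filter.mp hx).1 (ne_of_mem_erase hj)
      _ ≤ ∑ x with f (bflip x i) ≠ f (bflip (bflip x i) j), c * mu p x :=
          sum_le_sum_of_subset_of_nonneg (filter_subset_filter _ (subset_univ _))
            fun x _ _ => mul_nonneg hc (mu_nonneg hp' x)
      _ ≤ c * (flipProb p f j / (p * (1 - p))) := by
          rw [← mul_sum]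
          gcongr
          rw [le_div_iff₀' hv]
          exact mul_sum_mu_comp_bflip_le hp' i fun x => f x ≠ f (bflip x j)
  calc _ ≤ ∑ j ∈ univ.erase i, c * (flipProb p f j / (p * (1 - p))) := sum_le_sum hbound
    _ ≤ ∑ j, c * (flipProb p f j / (p * (1 - p))) :=
        sum_le_sum_of_subset_of_nonneg (erase_subset _ _) fun j _ _ =>
          mul_nonneg hc (div_nonneg (flipProb_nonneg hp' f j) hv.le)
    _ = 2 * densityBound n p t / (n * (p * (1 - p)) ^ 3) * totalInf p f := by
        rw [← mul_sum, ← sum_div, totalInf_eq_mul_sum_flipProb]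
        simp only [c]
        field_simp

lemma pinf_le_sum_centralSlab_add (hp : p ∈ Set.Icc 0 1) {t : ℝ} (ht : 0 < t)
    (f : (Fin n → Bool) → Bool) (i : Fin n) :
    pinf p f i ≤ 2 * ∑ x ∈ centralSlab n p t with f x ≠ f (bflip x i) ∧ Even (weight x), mu p x
      + 2 * (n * (p * (1 - p)) / t ^ 2) := by
  have hsplit : ∑ x with f x ≠ f (bflip x i) ∧ Even (weight x), mu p x
      ≤ ∑ x with x ∈ centralSlab n p t ∧ f x ≠ f (bflip x i) ∧ Even (weight x), mu p x
        + ∑ x with x ∉ centralSlab n p t, mu p x :=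
    sum_filter_le_sum_filter_add_sum_filter (fun x _ => mu_nonneg hp x) fun x _ hx =>
      (Classical.em _).imp_left (And.intro · hx)
  rw [← filter_filter (· ∈ centralSlab n p t), filter_univ_mem] at hsplit
  linarith [pinf_le_two_mul_sum_even hp f i, sum_mu_compl_centralSlab_le (n := n) hp ht]

lemma pinf_le_expect_flipProb_add (hp : p ∈ Set.Ioo 0 1) {t : ℝ} (ht : 0 < t)
    (hn : 2 ≤ n * (p * (1 - p))) (htn : t ≤ n * (p * (1 - p)))
    (f : (Fin (2 * n) → Bool) → Bool) (i : Fin (2 * n)) :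
    pinf p f i ≤ 8 * (𝔼 π ∈ twoToOneMaps n, flipProb p (fun y => f (y ∘ π)) (π i))
      + 16 * densityBound n p t / (n * (p * (1 - p)) ^ 3) * totalInf p f
      + 4 * (n * (p * (1 - p))) / t ^ 2 := by
  have hp' := Set.Ioo_subset_Icc_self hp
  set S := centralSlab (2 * n) p t
  have hlaw : ∑ x ∈ S with f x ≠ f (bflip x i) ∧ Even (weight x), mu p x
      ≤ 4 * ∑ x ∈ S with f x ≠ f (bflip x i), meanLiftLaw p x :=
    calc ∑ x ∈ S with f x ≠ f (bflip x i) ∧ Even (weight x), mu p x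
        ≤ ∑ x ∈ S with f x ≠ f (bflip x i) ∧ Even (weight x), 4 * meanLiftLaw p x :=
          sum_le_sum fun x hx => by
            obtain ⟨hxS, -, heven⟩ := mem_filter.mp hx
            obtain ⟨hpos, hlt⟩ :=
              weight_pos_and_lt_of_mem_centralSlab (two_pos.trans_le hn) htn hxS
            exact mu_le_four_mul_meanLiftLaw hp heven hpos hlt
      _ ≤ 4 * ∑ x ∈ S with f x ≠ f (bflip x i), meanLiftLaw p x := by
          rw [mul_sum]
          exact sum_le_sum_of_subset_of_nonneg (monotone_filter_right S fun x _ hx => hx.1)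
            fun x _ _ => mul_nonneg zero_le_four (meanLiftLaw_nonneg hp' x)
  have hmain := pinf_le_sum_centralSlab_add hp' ht f i
  have havg := sum_meanLiftLaw_le_expect_flipProb_add hp' f i S
  have herr := sum_pairedLiftLaw_centralSlab_le hp hn htn f i
  push_cast at hmain
  calc pinf p f i
      ≤ 8 * ((𝔼 π ∈ twoToOneMaps n, flipProb p (fun y => f (y ∘ π)) (π i))
          + 2 * densityBound n p t / (n * (p * (1 - p)) ^ 3) * totalInf p f)
        + 2 * (2 * n * (p * (1 - p)) / t ^ 2) := by linarith
    _ = _ := by ring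

end Minor

lemma expect_le_card_filter_div_card_add {α : Type*} {s : Finset α} (hs : s.Nonempty) {g : α → ℝ}
    {b : ℝ} (hb : 0 ≤ b) (hg : ∀ x ∈ s, g x ≤ 1) :
    𝔼 x ∈ s, g x ≤ #{x ∈ s | b ≤ g x} / #s + b :=
  calc 𝔼 x ∈ s, g x ≤ 𝔼 x ∈ s, ((if b ≤ g x then 1 else 0) + b) :=
        expect_le_expect fun x hx => by
          split_ifs with h
          · linarith [hg x hx]
          · linarith
    _ = #{x ∈ s | b ≤ g x} / #s + b := by
        rw [expect_add_distrib, expect_const hs, expect_eq_sum_div_card, sum_boole]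

section Constants

variable {n : ℕ} {p δ v : ℝ}

/-- The bound `γ` on the total influence per coordinate, in terms of the influence `δ` that is to
be preserved and of the variance `v = p * (1 - p)` of a coordinate. -/
noncomputable def influenceThreshold (δ v : ℝ) : ℝ :=
  δ * v ^ 3 / (448 * Real.exp (1 / (δ * v)))

lemma influenceThreshold_pos (hδ : 0 < δ) (hv : 0 < v) : 0 < influenceThreshold δ v := by
  unfold influenceThreshold
  positivity

lemma influenceThreshold_mono (hδ : 0 < δ) (hv : 0 < v) {v' : ℝ} (h : v ≤ v') :
    influenceThreshold δ v ≤ influenceThreshold δ v' := by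
  have hv' := hv.trans_le h
  unfold influenceThreshold
  gcongr

lemma le_expect_flipProb_minor (hp : p ∈ Set.Ioo 0 1) (hδ : 0 < δ)
    (hn : 2 ≤ n * (p * (1 - p))) (hnδ : 4 / δ ≤ n * (p * (1 - p)) ^ 2)
    (f : (Fin (2 * n) → Bool) → Bool)
    (hf : totalInf p f ≤ influenceThreshold δ (p * (1 - p)) * n) {i : Fin (2 * n)}
    (hi : δ ≤ pinf p f i) :
    δ / 16 ≤ 𝔼 π ∈ twoToOneMaps n, flipProb p (fun y => f (y ∘ π)) (π i) := by
  have hv : 0 < p * (1 - p) := mul_pos hp.1 (sub_pos.mpr hp.2)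
  have hn0 : (0 : ℝ) < n := pos_of_mul_pos_left (two_pos.trans_le hn) hv.le
  have hv4 : p * (1 - p) ≤ 1 / 4 := by nlinarith [sq_nonneg (p - 1 / 2)]
  set v := p * (1 - p) with hv_def
  -- With this radius the complement of the slab contributes at most `δ * v ≤ δ / 4`.
  set t := 2 * √(n / δ)
  have ht0 : 0 < t := by positivity
  have htsq : t ^ 2 = 4 * (n / δ) := by
    rw [mul_pow, Real.sq_sqrt (by positivity)]
    norm_num
  have ht : t ≤ n * v := by
    refine le_of_sq_le_sq ?_ (by positivity)
    calc t ^ 2 = n * (4 / δ) := by rw [htsq]; ring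
      _ ≤ n * (n * v ^ 2) := by gcongr
      _ = (n * v) ^ 2 := by ring
  have hdensity : densityBound n p t = 7 * Real.exp (1 / (δ * v)) := by
    rw [densityBound, htsq, ← hv_def]
    congr 2
    field_simp
  have htail : 4 * (n * v) / t ^ 2 ≤ δ / 4 := by
    rw [htsq]
    calc 4 * (n * v) / (4 * (n / δ)) = δ * v := by field_simp
      _ ≤ δ * (1 / 4) := by gcongr
      _ = δ / 4 := by ring
  have herror : 16 * densityBound n p t / (n * v ^ 3) * totalInf p f ≤ δ / 4 := by
    rw [hdensity]
    calc 16 * (7 * Real.exp (1 / (δ * v))) / (n * v ^ 3) * totalInf p f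
        ≤ 16 * (7 * Real.exp (1 / (δ * v))) / (n * v ^ 3) * (influenceThreshold δ v * n) := by
          gcongr
      _ = δ / 4 := by
          rw [influenceThreshold]
          field_simp
          norm_num
  linarith [pinf_le_expect_flipProb_add hp ht0 hn ht f i]

lemma le_card_filter_flipProb_minor_div_card (hp : p ∈ Set.Ioo 0 1) (hδ : 0 < δ) (hv : 0 < v)
    (hvp : v ≤ p * (1 - p)) (hn : 2 / v + 4 / (δ * v ^ 2) ≤ n)
    {f : (Fin (2 * n) → Bool) → Bool} (hf : totalInf p f ≤ influenceThreshold δ v * n)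
    {i : Fin (2 * n)} (hi : δ ≤ pinf p f i) :
    δ / 32 ≤ (#{π ∈ twoToOneMaps n | δ / 32 ≤ flipProb p (fun y => f (y ∘ π)) (π i)} : ℝ)
      / #(twoToOneMaps n) := by
  have hn2 : 2 ≤ n * (p * (1 - p)) :=
    calc (2 : ℝ) = 2 / v * v := (div_mul_cancel₀ 2 hv.ne').symm
      _ ≤ n * (p * (1 - p)) := by
        gcongr
        exact (le_add_of_nonneg_right (by positivity)).trans hn
  have hnδ : 4 / δ ≤ n * (p * (1 - p)) ^ 2 :=
    calc 4 / δ = 4 / (δ * v ^ 2) * v ^ 2 := by field_simp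
      _ ≤ n * (p * (1 - p)) ^ 2 := by
        gcongr
        exact (le_add_of_nonneg_left (by positivity)).trans hn
  have hthreshold := influenceThreshold_mono hδ hv hvp
  have hmean := le_expect_flipProb_minor hp hδ hn2 hnδ f (hf.trans (by gcongr)) hi
  have hmarkov := expect_le_card_filter_div_card_add (twoToOneMaps_nonempty n)
    (div_nonneg hδ.le (by norm_num : (0 : ℝ) ≤ 32)) fun π _ =>
      flipProb_le_one (Set.Ioo_subset_Icc_self hp) (fun y => f (y ∘ π)) (π i)
  linarith

end Constants

/-- Influence preservation under random 2-to-1 minors: for every `λ ∈ (0,1/2)` and `δ > 0`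
there are `γ, τ > 0` and `n₀` such that for all `n ≥ n₀`, `p ∈ (λ,1−λ)` and
`f : {0,1}^{2n} → {0,1}` with `I^{(p)}(f) ≤ γ·n` and a coordinate `i` with
`Inf_i^{(p)}(f) ≥ δ`, a uniformly random 2-to-1 minor map `π : [2n] → [n]` satisfies
`Inf_{π(i)}^{(p)}(f^π) ≥ τ` with probability at least `τ`, where `f^π(y) = f(y ∘ π)`. -/
theorem influence_preservation :
    ∀ lam : ℝ, lam ∈ Set.Ioo (0:ℝ) (1/2) → ∀ δ : ℝ, 0 < δ →
    ∃ γ : ℝ, 0 < γ ∧ ∃ τ : ℝ, 0 < τ ∧ ∃ n₀ : ℕ,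
      ∀ n : ℕ, n₀ ≤ n → ∀ p : ℝ, p ∈ Set.Ioo lam (1 - lam) →
      ∀ f : (Fin (2*n) → Bool) → Bool, totalInf p f ≤ γ * n →
      ∀ i : Fin (2*n), δ ≤ pinf p f i →
      τ ≤ ((Finset.univ.filter (fun π : Fin (2*n) → Fin n =>
              IsTwoToOne π ∧ τ ≤ pinf p (fun y => f (y ∘ π)) (π i))).card : ℝ) /
            ((Finset.univ.filter (fun π : Fin (2*n) → Fin n => IsTwoToOne π)).card : ℝ) := by
  intro lam ⟨hlam0, hlam1⟩ δ hδ
  have hv : 0 < lam * (1 - lam) := mul_pos hlam0 (by linarith)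
  set v := lam * (1 - lam)
  refine ⟨influenceThreshold δ v, influenceThreshold_pos hδ hv, v * (δ / 32), by positivity,
    ⌈2 / v + 4 / (δ * v ^ 2)⌉₊, fun n hn p hp f hf i hi => ?_⟩
  have hp01 : p ∈ Set.Ioo 0 1 := ⟨hlam0.trans hp.1, by linarith [hp.2]⟩
  have hvp : v ≤ p * (1 - p) := by nlinarith [mul_pos (sub_pos.mpr hp.1) (sub_pos.mpr hp.2)]
  have hv1 : v ≤ 1 := mul_le_one₀ (by linarith) (by linarith) (by linarith)
  have hpinf (π : Fin (2 * n) → Fin n) (h : δ / 32 ≤ flipProb p (fun y => f (y ∘ π)) (π i)) :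
      v * (δ / 32) ≤ pinf p (fun y => f (y ∘ π)) (π i) := by
    rw [pinf_eq_mul_flipProb]
    exact mul_le_mul hvp h (by positivity) (hv.le.trans hvp)
  calc v * (δ / 32) ≤ δ / 32 := mul_le_of_le_one_left (by positivity) hv1
    _ ≤ (#{π ∈ twoToOneMaps n | δ / 32 ≤ flipProb p (fun y => f (y ∘ π)) (π i)} : ℝ)
          / #(twoToOneMaps n) :=
        le_card_filter_flipProb_minor_div_card hp01 hδ hv hvp (Nat.le_of_ceil_le hn) hf hi
    _ ≤ _ := by
        rw [← filter_filter]
        exact div_le_div_of_nonneg_right (Nat.cast_le.mpr (card_le_card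
          (monotone_filter_right _ fun π _ => hpinf π))) (Nat.cast_nonneg _)
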